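/- Let τ ∈ [0,1] and n ≥ 1. For every partition π of {1,…,n} with k blocks of sizes n_1,…,n_k, one has m_n(A_π) = p_τ(π), where p_τ(π) = (1−τ)^{k−1} · τ^{n−k} · ∏_{i=1}^k (n_i − 1)! / ∏_{j=1}^{n−1}((1−τ)+jτ). In particular m_n(A_π) depends only on the multiset of block sizes of π. -/

import Mathlib

open MeasureTheory

noncomputable section

/-- The circle `ℝ/ℤ`. -/
abbrev Circle1 : Type := AddCircle (1 : ℝ)

/-- The Pólya-urn type Markov kernel
`κ_n(x, ·) = ((1−τ)·λ + τ·Σ_{i=1}^n δ_{x_i}) / ((1−τ) + nτ)`. -/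
def urnKernel (τ : ℝ) {n : ℕ} (x : Fin n → Circle1) : Measure Circle1 :=
  (ENNReal.ofReal ((1 - τ) + n * τ))⁻¹ •
    (ENNReal.ofReal (1 - τ) • (volume : Measure Circle1)
      + ENNReal.ofReal τ • ∑ i : Fin n, Measure.dirac (x i))

/-- The urn measures: `m 1 = λ` and `m (n+1)` is the image of the measure–kernel
product `m n ⊗ κ_n` under `(x, y) ↦ (x_1, …, x_n, y)`.  (`m 0` is a dummy value.) -/
def urnMeasure (τ : ℝ) : (n : ℕ) → Measure (Fin n → Circle1)
  | 0 => Measure.dirac (fun i => i.elim0)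
  | 1 => (volume : Measure Circle1).map (fun y => fun _ : Fin 1 => y)
  | (n + 2) =>
      (urnMeasure τ (n + 1)).bind
        (fun x => (urnKernel τ x).map (Fin.snoc x))

/-- For a partition `π` of `{1,…,n}`, the set `A_π` of `x` with `x i = x j` iff `i`
and `j` lie in the same block of `π`. -/
def samePartSet {n : ℕ} (P : Finpartition (Finset.univ : Finset (Fin n))) :
    Set (Fin n → Circle1) :=
  {x | ∀ i j : Fin n, x i = x j ↔ ∃ B ∈ P.parts, i ∈ B ∧ j ∈ B}

/-- The Ewens weight of a partition `π` of `{1,…,n}` with `k` blocks of sizes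
`n_1,…,n_k`:
`p_τ(π) = (1−τ)^{k−1} · τ^{n−k} · ∏_i (n_i − 1)! / ∏_{j=1}^{n−1}((1−τ)+jτ)`. -/
def ewens (τ : ℝ) (n : ℕ) (P : Finpartition (Finset.univ : Finset (Fin n))) : ℝ :=
  ((1 - τ) ^ (P.parts.card - 1) * τ ^ (n - P.parts.card) *
    ∏ B ∈ P.parts, ((B.card - 1).factorial : ℝ)) /
    ∏ j ∈ Finset.Icc 1 (n - 1), ((1 - τ) + (j : ℝ) * τ)


theorem aux_atom (y : Circle1) : (volume : Measure Circle1) {y} = 0 := by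
  have h := AddCircle.volume_closedBall (T := (1 : ℝ)) (x := y) 0
  rw [Metric.closedBall_zero] at h
  rw [h]
  simp

theorem aux_range {n : ℕ} (x : Fin n → Circle1) :
    (volume : Measure Circle1) (Set.range x) = 0 := by
  rw [← Set.iUnion_singleton_eq_range, measure_iUnion_null_iff]
  exact fun i => aux_atom _

theorem aux_same {n : ℕ} (P : Finpartition (Finset.univ : Finset (Fin n))) (i j : Fin n) :
    (∃ B ∈ P.parts, i ∈ B ∧ j ∈ B) ↔ j ∈ P.part i := by
  constructor
  · rintro ⟨B, hB, hi, hj⟩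
    rwa [P.part_eq_of_mem hB hi]
  · intro h
    exact ⟨P.part i, P.part_mem.2 (Finset.mem_univ i), P.mem_part (Finset.mem_univ i), h⟩

theorem aux_measSet {n : ℕ} (P : Finpartition (Finset.univ : Finset (Fin n))) :
    MeasurableSet (samePartSet P) := by
  have h : samePartSet P = ⋂ i : Fin n, ⋂ j : Fin n,
      {x : Fin n → Circle1 | x i = x j ↔ ∃ B ∈ P.parts, i ∈ B ∧ j ∈ B} := by
    ext x
    simp [samePartSet]
  rw [h]
  refine MeasurableSet.iInter fun i => MeasurableSet.iInter fun j => ?_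
  exact (measurableSet_eq_fun (measurable_pi_apply i) (measurable_pi_apply j)).iff
    (MeasurableSet.const _)

theorem aux_snoc {n : ℕ} :
    Measurable (fun p : (Fin n → Circle1) × Circle1 =>
      (Fin.snoc p.1 p.2 : Fin (n + 1) → Circle1)) := by
  refine measurable_pi_iff.2 fun i => ?_
  refine Fin.lastCases ?_ (fun j => ?_) i
  · simp only [Fin.snoc_last]
    exact measurable_snd
  · simp only [Fin.snoc_castSucc]
    exact (measurable_pi_apply j).comp measurable_fst

theorem aux_snoc' {n : ℕ} (x : Fin n → Circle1) :
    Measurable (fun y : Circle1 => (Fin.snoc x y : Fin (n + 1) → Circle1)) :=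
  aux_snoc.comp measurable_prodMk_left

theorem aux_kernel (τ : ℝ) {n : ℕ} :
    Measurable (fun x : Fin n → Circle1 =>
      ((urnKernel τ x).map (Fin.snoc x) : Measure (Fin (n + 1) → Circle1))) := by
  refine Measure.measurable_of_measurable_coe _ fun s hs => ?_
  have h : ∀ x : Fin n → Circle1,
      ((urnKernel τ x).map (Fin.snoc x) : Measure (Fin (n + 1) → Circle1)) s =
      (ENNReal.ofReal ((1 - τ) + n * τ))⁻¹ *
        (ENNReal.ofReal (1 - τ) * (volume : Measure Circle1)
            (Prod.mk x ⁻¹' ((fun p : (Fin n → Circle1) × Circle1 =>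
              (Fin.snoc p.1 p.2 : Fin (n + 1) → Circle1)) ⁻¹' s))
        + ENNReal.ofReal τ * ∑ i : Fin n, s.indicator 1 (Fin.snoc x (x i) : Fin (n + 1) → Circle1)) := by
    intro x
    rw [Measure.map_apply (aux_snoc' x) hs]
    simp only [urnKernel, Measure.smul_apply, Measure.add_apply, Measure.finsetSum_apply,
      smul_eq_mul]
    congr 3
    refine Finset.sum_congr rfl fun i _ => ?_
    rw [Measure.dirac_apply' _ (aux_snoc' x hs)]
    rfl
  simp_rw [h]
  refine Measurable.const_mul (Measurable.add (Measurable.const_mul ?_ _)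
    (Measurable.const_mul (Finset.measurable_sum _ fun i _ => ?_) _)) _
  · exact measurable_measure_prodMk_left (aux_snoc hs)
  · exact (measurable_one.indicator hs).comp
      (aux_snoc.comp (measurable_id.prodMk (measurable_pi_apply i)))

/-- Trace of a block. -/
def auxPre {n : ℕ} (B : Finset (Fin (n + 1))) : Finset (Fin n) :=
  Finset.univ.filter fun i => i.castSucc ∈ B

theorem mem_auxPre {n : ℕ} (B : Finset (Fin (n + 1))) (i : Fin n) :
    i ∈ auxPre B ↔ i.castSucc ∈ B := by simp [auxPre]

theorem auxPre_map {n : ℕ} (B : Finset (Fin (n + 1))) :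
    (auxPre B).map Fin.castSuccEmb = B.erase (Fin.last n) := by
  ext i
  refine Fin.lastCases ?_ (fun j => ?_) i
  · simp [Fin.castSucc_ne_last]
  · simp [mem_auxPre, Fin.castSucc_ne_last]

theorem auxPre_card {n : ℕ} (B : Finset (Fin (n + 1))) :
    (auxPre B).card = (B.erase (Fin.last n)).card := by
  rw [← auxPre_map, Finset.card_map]

/-- The restricted partition. -/
def auxRes {n : ℕ} (P : Finpartition (Finset.univ : Finset (Fin (n + 1)))) :
    Finpartition (Finset.univ : Finset (Fin n)) :=
  Finpartition.ofExistsUnique ((P.parts.filter fun B => (auxPre B).Nonempty).image auxPre)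
    (fun _ _ => Finset.subset_univ _)
    (by
      intro i _
      refine ⟨auxPre (P.part i.castSucc), ⟨?_, ?_⟩, ?_⟩
      · refine Finset.mem_image_of_mem _ (Finset.mem_filter.2
          ⟨P.part_mem.2 (Finset.mem_univ _), i, ?_⟩)
        rw [mem_auxPre]
        exact P.mem_part (Finset.mem_univ _)
      · rw [mem_auxPre]
        exact P.mem_part (Finset.mem_univ _)
      · rintro C ⟨hC, hi⟩
        obtain ⟨B, hB, rfl⟩ := Finset.mem_image.1 hC
        rw [mem_auxPre] at hi
        rw [P.part_eq_of_mem (Finset.mem_filter.1 hB).1 hi])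
    (by
      intro h
      obtain ⟨B, hB, h⟩ := Finset.mem_image.1 h
      have := (Finset.mem_filter.1 hB).2
      rw [h] at this
      exact absurd this (by simp))

theorem auxRes_parts {n : ℕ} (P : Finpartition (Finset.univ : Finset (Fin (n + 1)))) :
    (auxRes P).parts = (P.parts.filter fun B => (auxPre B).Nonempty).image auxPre := rfl

theorem auxRes_inj {n : ℕ} (P : Finpartition (Finset.univ : Finset (Fin (n + 1)))) :
    Set.InjOn auxPre ((P.parts.filter fun B => (auxPre B).Nonempty :
      Finset (Finset (Fin (n+1)))) : Set (Finset (Fin (n + 1)))) := by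
  intro B hB C hC h
  have hB := Finset.mem_filter.1 (Finset.mem_coe.1 hB)
  have hC := Finset.mem_filter.1 (Finset.mem_coe.1 hC)
  obtain ⟨i, hi⟩ := hB.2
  have hi' := hi
  rw [h] at hi'
  rw [mem_auxPre] at hi hi'
  exact P.eq_of_mem_parts hB.1 hC.1 hi hi'

theorem auxRes_part {n : ℕ} (P : Finpartition (Finset.univ : Finset (Fin (n + 1)))) (i j : Fin n) :
    j ∈ (auxRes P).part i ↔ j.castSucc ∈ P.part i.castSucc := by
  rw [← aux_same, ← aux_same, auxRes_parts]
  constructor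
  · rintro ⟨C, hC, hi, hj⟩
    obtain ⟨B, hB, rfl⟩ := Finset.mem_image.1 hC
    exact ⟨B, (Finset.mem_filter.1 hB).1, (mem_auxPre _ _).1 hi, (mem_auxPre _ _).1 hj⟩
  · rintro ⟨B, hB, hi, hj⟩
    exact ⟨auxPre B, Finset.mem_image_of_mem _ (Finset.mem_filter.2
      ⟨hB, i, (mem_auxPre _ _).2 hi⟩), (mem_auxPre _ _).2 hi, (mem_auxPre _ _).2 hj⟩

theorem mem_same {n : ℕ} (P : Finpartition (Finset.univ : Finset (Fin n))) (x : Fin n → Circle1) :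
    x ∈ samePartSet P ↔ ∀ i j, x i = x j ↔ j ∈ P.part i := by
  simp only [samePartSet, Set.mem_ofPred_eq, aux_same]

theorem aux_symm {n : ℕ} (P : Finpartition (Finset.univ : Finset (Fin n))) (i j : Fin n) :
    j ∈ P.part i ↔ i ∈ P.part j := by
  rw [← aux_same, ← aux_same]
  simp only [and_comm]

theorem mem_snoc {n : ℕ} (P : Finpartition (Finset.univ : Finset (Fin (n + 1))))
    (x : Fin n → Circle1) (y : Circle1) :
    (Fin.snoc x y : Fin (n + 1) → Circle1) ∈ samePartSet P ↔
      x ∈ samePartSet (auxRes P) ∧ ∀ i, y = x i ↔ i.castSucc ∈ P.part (Fin.last n) := by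
  rw [mem_same, mem_same]
  constructor
  · intro h
    refine ⟨fun i j => ?_, fun i => ?_⟩
    · rw [auxRes_part, ← h]; simp
    · rw [← h]; simp
  · rintro ⟨h1, h2⟩ i j
    refine Fin.lastCases ?_ (fun i => ?_) i <;> refine Fin.lastCases ?_ (fun j => ?_) j
    · simp
    · simp [h2]
    · rw [aux_symm, ← h2]; simp [eq_comm]
    · rw [← auxRes_part, ← h1]; simp

/-- Ratio of successive weights. -/
def auxRatio (τ : ℝ) {n : ℕ} (P : Finpartition (Finset.univ : Finset (Fin (n + 1)))) : ℝ :=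
  (if (auxPre (P.part (Fin.last n))) = ∅ then 1 - τ else
    τ * (auxPre (P.part (Fin.last n))).card) / ((1 - τ) + n * τ)

theorem kernel_val (τ : ℝ) (hτ0 : 0 ≤ τ) (hτ1 : τ ≤ 1) {n : ℕ} (hn : 1 ≤ n)
    (P : Finpartition (Finset.univ : Finset (Fin (n + 1)))) (x : Fin n → Circle1) :
    ((urnKernel τ x).map (Fin.snoc x) : Measure (Fin (n + 1) → Circle1)) (samePartSet P) =
      (samePartSet (auxRes P)).indicator (fun _ => ENNReal.ofReal (auxRatio τ P)) x := by
  have hpos : 0 < (1 - τ) + n * τ := by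
    have : (1 : ℝ) ≤ n := by exact_mod_cast hn
    nlinarith
  rw [Measure.map_apply (aux_snoc' x) (aux_measSet P)]
  by_cases hx : x ∈ samePartSet (auxRes P)
  swap
  · rw [Set.indicator_of_notMem hx]
    have : Fin.snoc (α := fun _ => Circle1) x ⁻¹' samePartSet P = ∅ := by
      ext y
      simp only [Set.mem_preimage, Set.mem_empty_iff_false, iff_false]
      exact fun h => hx ((mem_snoc P x y).1 h).1
    rw [this, measure_empty]
  rw [Set.indicator_of_mem hx]
  by_cases he : auxPre (P.part (Fin.last n)) = ∅
  · have : Fin.snoc (α := fun _ => Circle1) x ⁻¹' samePartSet P = (Set.range x)ᶜ := by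
      ext y
      have h0 : ∀ i : Fin n, ¬ i.castSucc ∈ P.part (Fin.last n) := by
        intro i hi
        rw [← mem_auxPre, he] at hi
        simp at hi
      rw [Set.mem_preimage]
      refine (mem_snoc P x y).trans ?_
      simp [hx, h0, eq_comm]
    rw [this]
    have hfin : (Set.range x).Finite := Set.finite_range x
    have hm : MeasurableSet (Set.range x)ᶜ := hfin.measurableSet.compl
    have hv : (volume : Measure Circle1) (Set.range x)ᶜ = 1 := by
      rw [measure_compl hfin.measurableSet (measure_ne_top _ _), aux_range x]
      simp
    simp only [urnKernel, Measure.smul_apply, Measure.add_apply, Measure.finsetSum_apply,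
      smul_eq_mul, Measure.dirac_apply' _ hm, hv]
    simp only [auxRatio, he, if_true]
    rw [ENNReal.ofReal_div_of_pos hpos, ENNReal.div_eq_inv_mul]
    simp
  · obtain ⟨i0, hi0⟩ := Finset.nonempty_iff_ne_empty.2 he
    rw [mem_auxPre] at hi0
    have hp : P.part i0.castSucc = P.part (Fin.last n) :=
      P.part_eq_of_mem (P.part_mem.2 (Finset.mem_univ _)) hi0
    have hx' := (mem_same _ _).1 hx
    have : Fin.snoc (α := fun _ => Circle1) x ⁻¹' samePartSet P = {x i0} := by
      ext y
      rw [Set.mem_preimage]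
      refine (mem_snoc P x y).trans ?_
      simp only [hx, true_and, Set.mem_singleton_iff]
      constructor
      · intro h
        exact (h i0).2 hi0
      · rintro rfl i
        rw [hx', auxRes_part, hp]
    rw [this]
    have hm : MeasurableSet ({x i0} : Set Circle1) := measurableSet_singleton _
    have hs : ∑ i : Fin n, ({x i0} : Set Circle1).indicator (1 : Circle1 → ENNReal) (x i) =
        (auxPre (P.part (Fin.last n))).card := by
      rw [auxPre, Finset.card_filter]
      push_cast
      refine Finset.sum_congr rfl fun i _ => ?_
      have : x i = x i0 ↔ i.castSucc ∈ P.part (Fin.last n) := by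
        rw [eq_comm, hx', auxRes_part, hp]
      simp [Set.indicator_apply, this]
    simp only [urnKernel, Measure.smul_apply, Measure.add_apply, Measure.finsetSum_apply,
      smul_eq_mul, Measure.dirac_apply' _ hm, hs, aux_atom]
    simp only [auxRatio, he, if_false]
    rw [ENNReal.ofReal_div_of_pos hpos, ENNReal.div_eq_inv_mul, ENNReal.ofReal_mul hτ0]
    simp

theorem ewens_step (τ : ℝ) {n : ℕ} (hn : 1 ≤ n)
    (P : Finpartition (Finset.univ : Finset (Fin (n + 1)))) :
    ewens τ (n + 1) P = auxRatio τ P * ewens τ n (auxRes P) := by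
  set B0 := P.part (Fin.last n) with hB0
  have hB0m : B0 ∈ P.parts := P.part_mem.2 (Finset.mem_univ _)
  have hl : Fin.last n ∈ B0 := P.mem_part (Finset.mem_univ _)
  have hother : ∀ B ∈ P.parts.erase B0, Fin.last n ∉ B := by
    intro B hB h
    exact (Finset.mem_erase.1 hB).1 (P.part_eq_of_mem (Finset.mem_erase.1 hB).2 h).symm
  have hcard : ∀ B ∈ P.parts.erase B0, (auxPre B).card = B.card := by
    intro B hB
    rw [auxPre_card, Finset.erase_eq_of_notMem (hother B hB)]
  have hne : ∀ B ∈ P.parts.erase B0, (auxPre B).Nonempty := by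
    intro B hB
    rw [← Finset.card_pos, hcard B hB, Finset.card_pos]
    exact P.nonempty_of_mem_parts (Finset.mem_erase.1 hB).2
  have hc0 : (auxPre B0).card + 1 = B0.card := by
    rw [auxPre_card, Finset.card_erase_add_one hl]
  have hk : (auxRes P).parts.card ≤ n := by
    simpa using (auxRes P).card_parts_le_card
  have hk1 : 1 ≤ (auxRes P).parts.card := by
    rw [Nat.one_le_iff_ne_zero, ← Nat.pos_iff_ne_zero, Finset.card_pos]
    exact ⟨_, (auxRes P).part_mem.2 (Finset.mem_univ (⟨0, hn⟩ : Fin n))⟩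
  have hcI := Finset.card_image_of_injOn (auxRes_inj P)
  rw [← auxRes_parts] at hcI
  have hpI := Finset.prod_image (f := fun B : Finset (Fin n) => ((B.card - 1).factorial : ℝ))
    (auxRes_inj P)
  rw [← auxRes_parts] at hpI
  have hprod : ∏ B ∈ P.parts.erase B0, (((auxPre B).card - 1).factorial : ℝ) =
      ∏ B ∈ P.parts.erase B0, ((B.card - 1).factorial : ℝ) :=
    Finset.prod_congr rfl fun B hB => by rw [hcard B hB]
  have hPp := Finset.mul_prod_erase P.parts (fun B => ((B.card - 1).factorial : ℝ)) hB0m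
  have hPc := Finset.card_erase_add_one hB0m
  have hden : ∏ j ∈ Finset.Icc 1 n, ((1 - τ) + (j : ℝ) * τ) =
      (∏ j ∈ Finset.Icc 1 (n - 1), ((1 - τ) + (j : ℝ) * τ)) * ((1 - τ) + n * τ) := by
    obtain ⟨m, rfl⟩ : ∃ m, n = m + 1 := ⟨n - 1, by omega⟩
    rw [Finset.prod_Icc_succ_top (by omega)]
    simp
  unfold ewens auxRatio
  rw [← hB0, Nat.add_sub_cancel, hden, ← hPp]
  by_cases he : auxPre B0 = ∅
  · have hS : (P.parts.filter fun B => (auxPre B).Nonempty) = P.parts.erase B0 := by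
      ext B
      rw [Finset.mem_filter, Finset.mem_erase]
      constructor
      · rintro ⟨h1, h2⟩
        refine ⟨?_, h1⟩
        rintro h
        rw [h, he] at h2
        simp at h2
      · rintro ⟨h1, h2⟩
        exact ⟨h2, hne B (Finset.mem_erase.2 ⟨h1, h2⟩)⟩
    rw [hS] at hcI hpI
    rw [hprod] at hpI
    rw [hpI, if_pos he, ← hc0, he, ← hPc, ← hcI]
    obtain ⟨k, hkk⟩ : ∃ k, (auxRes P).parts.card = k + 1 := ⟨_, (Nat.sub_add_cancel hk1).symm⟩
    rw [hkk, Nat.add_sub_add_right]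
    simp only [Nat.add_sub_cancel, Finset.card_empty, zero_add, Nat.sub_self, Nat.factorial_zero]
    rw [div_mul_div_comm]
    congr 1 <;> push_cast <;> ring
  · have hS : (P.parts.filter fun B => (auxPre B).Nonempty) = P.parts := by
      refine Finset.filter_true_of_mem fun B hB => ?_
      by_cases h : B = B0
      · rw [h]; exact Finset.nonempty_iff_ne_empty.2 he
      · exact hne B (Finset.mem_erase.2 ⟨h, hB⟩)
    rw [hS] at hcI hpI
    rw [← Finset.mul_prod_erase P.parts _ hB0m, hprod] at hpI
    rw [hpI, if_neg he, ← hc0, ← hcI]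
    obtain ⟨c, hcc⟩ : ∃ c, (auxPre B0).card = c + 1 :=
      ⟨(auxPre B0).card - 1, by
        have := Finset.card_pos.2 (Finset.nonempty_iff_ne_empty.2 he); omega⟩
    rw [hcc, Nat.succ_sub hk, pow_succ]
    simp only [Nat.add_sub_cancel, Nat.factorial_succ]
    rw [div_mul_div_comm]
    congr 1 <;> push_cast <;> ring

/-- for every partition `π` of `{1,…,n}`, `m_n(A_π) = p_τ(π)`, the Ewens
weight; in particular `m_n(A_π)` depends only on the block sizes of `π`. -/
theorem urnMeasure_samePartSet_eq_ewens (τ : ℝ) (hτ0 : 0 ≤ τ) (hτ1 : τ ≤ 1)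
    (n : ℕ) (hn : 1 ≤ n)
    (P : Finpartition (Finset.univ : Finset (Fin n))) :
    urnMeasure τ n (samePartSet P) = ENNReal.ofReal (ewens τ n P) := by
  induction n, hn using Nat.le_induction with
  | base =>
    have h1 : samePartSet P = Set.univ := by
      ext x
      rw [mem_same]
      simp only [Set.mem_univ, iff_true]
      intro i j
      rw [Subsingleton.elim j i]
      exact iff_of_true rfl (P.mem_part (Finset.mem_univ _))
    have h2 : P.parts.card = 1 := by
      refine le_antisymm (by simpa using P.card_parts_le_card) ?_
      rw [Nat.one_le_iff_ne_zero, ← Nat.pos_iff_ne_zero, Finset.card_pos]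
      exact ⟨_, P.part_mem.2 (Finset.mem_univ (0 : Fin 1))⟩
    have h3 : ∏ B ∈ P.parts, ((B.card - 1).factorial : ℝ) = 1 := by
      refine Finset.prod_eq_one fun B _ => ?_
      have : B.card ≤ 1 := by simpa using Finset.card_le_univ B
      rw [Nat.sub_eq_zero_of_le this]
      simp
    rw [h1, urnMeasure, Measure.map_apply (by fun_prop) MeasurableSet.univ]
    simp [ewens, h2, h3]
  | succ n hn ih =>
    have hdef : urnMeasure τ (n + 1) = (urnMeasure τ n).bind
        (fun x => (urnKernel τ x).map (Fin.snoc x)) := by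
      obtain ⟨m, rfl⟩ : ∃ m, n = m + 1 := ⟨n - 1, by omega⟩
      rw [urnMeasure]
    rw [hdef, Measure.bind_apply (aux_measSet P) (aux_kernel τ).aemeasurable]
    simp_rw [kernel_val τ hτ0 hτ1 hn P]
    rw [lintegral_indicator_const (aux_measSet _), ih, ewens_step τ hn P, ENNReal.ofReal_mul]
    unfold auxRatio
    refine div_nonneg ?_ ?_
    · split_ifs
      · linarith
      · positivity
    · have : (0 : ℝ) ≤ n * τ := by positivity
      linarith

end
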